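/- Let γ ∈ (0,1/2). There exists a constant C = C(γ) < ∞ such that the following holds. For all real numbers S, s₀ with 0 < S ≤ s₀/3, set a := 2S/s₀ ∈ (0,1), define φ : (0, ∞) → ℝ by φ(s) = f_a(2s/s₀), and note that for s ∈ (S, s₀/2) the second derivative of φ is φ''(s) = 2/(s₀ · s · log(1/a)) > 0. Then ∫_{S}^{s₀/2} s^{2γ} · (φ''(s))^{1+γ} · (φ(s))^{−γ} ds ≤ C / ( s₀ · (log s₀ − log S)^γ ). -/

import Mathlib

open MeasureTheory

/-- The flux function `f_a`, defined for `a ∈ (0,1)` by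
`f_a(σ) = (1/log(1/a)) * (σ*(log σ - log a) - (σ - a))`. -/
noncomputable def fluxFn (a : ℝ) : ℝ → ℝ :=
  fun σ => (1 / Real.log (1 / a)) * (σ * (Real.log σ - Real.log a) - (σ - a))

/-!
In the variable `u = log (s / S)` the rescaled flux `φ` satisfies `φ = s² φ'' r(u)`, where
`r(u) = e⁻ᵘ - 1 + u`, so all powers of `s` and `φ''` in the integrand cancel except for a single
factor `φ''`. Since `φ''(s) ds` is a constant multiple of `ds / s = du`, the integral equals
`2 / (s₀ L) * ∫₀ᴸ r(u)^(-γ) du` with `L = log (1/a)`. The bound `r(u) ≥ u² / (u + 2)` reduces this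
to `∫₀ᴸ u^(-2γ) du`, which converges because `γ < 1/2`, and `S ≤ s₀ / 3` keeps `L` away from `0`,
which makes `L`, `L + 2` and `log s₀ - log S` comparable.
-/

section ExpNegRemainder

/-- The first-order Taylor remainder `e⁻ᵘ - 1 + u` of `u ↦ e⁻ᵘ` at `0`, through which the flux
function factors in logarithmic coordinates. -/
noncomputable def expNegRemainder (u : ℝ) : ℝ :=
  Real.exp (-u) - 1 + u

variable {γ u L : ℝ}

lemma two_sub_le_two_add_mul_exp_neg (hu : 0 ≤ u) : 2 - u ≤ (2 + u) * Real.exp (-u) := by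
  have log_bound := Real.le_log_one_add_of_nonneg (sub_nonneg.2 (Real.one_le_exp hu))
  rw [add_sub_cancel, Real.log_exp, div_le_iff₀ (by linarith [Real.exp_pos u])] at log_bound
  rw [Real.exp_neg, ← div_eq_mul_inv, le_div_iff₀ (Real.exp_pos u)]
  linarith

lemma sq_div_add_two_le_expNegRemainder (hu : 0 ≤ u) : u ^ 2 / (u + 2) ≤ expNegRemainder u := by
  rw [expNegRemainder, div_le_iff₀ (by positivity)]
  linarith [two_sub_le_two_add_mul_exp_neg hu]

lemma expNegRemainder_nonneg (u : ℝ) : 0 ≤ expNegRemainder u := by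
  rw [expNegRemainder]
  linarith [Real.add_one_le_exp (-u)]

lemma expNegRemainder_rpow_neg_le (hγ : 0 ≤ γ) (hu : 0 < u) (huL : u ≤ L) :
    expNegRemainder u ^ (-γ) ≤ (L + 2) ^ γ * u ^ (-(2 * γ)) := by
  have hL : 0 < L + 2 := by linarith
  calc expNegRemainder u ^ (-γ)
      ≤ (u ^ 2 / (L + 2)) ^ (-γ) := by
        refine Real.rpow_le_rpow_of_nonpos (by positivity) ?_ (neg_nonpos.2 hγ)
        exact le_trans (by gcongr) (sq_div_add_two_le_expNegRemainder hu.le)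
    _ = (L + 2) ^ γ * u ^ (-(2 * γ)) := by
        rw [Real.div_rpow (sq_nonneg u) hL.le, Real.rpow_neg hL.le, div_inv_eq_mul, mul_comm,
          ← Real.rpow_natCast_mul hu.le, Nat.cast_ofNat, mul_neg]

lemma integrableOn_rpow_neg_two_mul (hγ : γ < 1 / 2) (L : ℝ) :
    IntegrableOn (fun u : ℝ => u ^ (-(2 * γ))) (Set.Ioo 0 L) :=
  (intervalIntegral.intervalIntegrable_rpow' (by linarith)).1.mono_set Set.Ioo_subset_Ioc_self

lemma integrableOn_expNegRemainder_rpow_neg (hγ₀ : 0 ≤ γ) (hγ : γ < 1 / 2) (L : ℝ) :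
    IntegrableOn (fun u => expNegRemainder u ^ (-γ)) (Set.Ioo 0 L) := by
  have measurable_remainder : Measurable expNegRemainder := by
    unfold expNegRemainder
    fun_prop
  refine ((integrableOn_rpow_neg_two_mul hγ L).const_mul ((L + 2) ^ γ)).mono'
    (measurable_remainder.pow_const _).aestronglyMeasurable ?_
  filter_upwards [ae_restrict_mem measurableSet_Ioo] with u hu
  rw [Real.norm_of_nonneg (Real.rpow_nonneg (expNegRemainder_nonneg u) _)]
  exact expNegRemainder_rpow_neg_le hγ₀ hu.1 hu.2.le

lemma setIntegral_expNegRemainder_rpow_neg_le (hγ₀ : 0 ≤ γ) (hγ : γ < 1 / 2) (hL : 0 ≤ L) :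
    ∫ u in Set.Ioo 0 L, expNegRemainder u ^ (-γ)
      ≤ (L + 2) ^ γ * (L ^ (1 - 2 * γ) / (1 - 2 * γ)) := by
  calc ∫ u in Set.Ioo 0 L, expNegRemainder u ^ (-γ)
      ≤ ∫ u in Set.Ioo 0 L, (L + 2) ^ γ * u ^ (-(2 * γ)) :=
        setIntegral_mono_on (integrableOn_expNegRemainder_rpow_neg hγ₀ hγ L)
          ((integrableOn_rpow_neg_two_mul hγ L).const_mul _) measurableSet_Ioo
          fun u hu => expNegRemainder_rpow_neg_le hγ₀ hu.1 hu.2.le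
    _ = (L + 2) ^ γ * (L ^ (1 - 2 * γ) / (1 - 2 * γ)) := by
        rw [integral_const_mul, ← integral_Ioc_eq_integral_Ioo,
          ← intervalIntegral.integral_of_le hL, integral_rpow (Or.inl (by linarith)),
          neg_add_eq_sub, Real.zero_rpow (by linarith), sub_zero]

end ExpNegRemainder

section LogarithmicSubstitution

lemma image_const_mul_exp_Ioo {S b : ℝ} (hS : 0 < S) (hb : 0 < b) :
    (fun u => S * Real.exp u) '' Set.Ioo 0 (Real.log (b / S)) = Set.Ioo S b := by
  ext s
  constructor
  · rintro ⟨u, ⟨hu₀, hu⟩, rfl⟩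
    rw [Real.lt_log_iff_exp_lt (by positivity), lt_div_iff₀' hS] at hu
    exact ⟨lt_mul_of_one_lt_right hS (Real.one_lt_exp_iff.2 hu₀), hu⟩
  · rintro ⟨hSs, hsb⟩
    have hs : 0 < s := hS.trans hSs
    refine ⟨Real.log (s / S), ⟨Real.log_pos ((one_lt_div hS).2 hSs), ?_⟩, ?_⟩
    · exact Real.log_lt_log (by positivity) (by gcongr)
    · simp only [Real.exp_log (div_pos hs hS), mul_div_cancel₀ s hS.ne']

lemma setIntegral_inv_smul_comp_log_div {E : Type*} [NormedAddCommGroup E] [NormedSpace ℝ E]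
    {S b : ℝ} (hS : 0 < S) (hb : 0 < b) (g : ℝ → E) :
    ∫ s in Set.Ioo S b, s⁻¹ • g (Real.log (s / S))
      = ∫ u in Set.Ioo 0 (Real.log (b / S)), g u := by
  have injective : Function.Injective fun u => S * Real.exp u :=
    (mul_right_injective₀ hS.ne').comp Real.exp_injective
  rw [← image_const_mul_exp_Ioo hS hb,
    integral_image_eq_integral_abs_deriv_smul measurableSet_Ioo
      (fun u _ => ((Real.hasDerivAt_exp u).const_mul S).hasDerivWithinAt) injective.injOn]
  refine integral_congr_ae (Filter.Eventually.of_forall fun u => ?_)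
  have hpos : 0 < S * Real.exp u := by positivity
  simp only [abs_of_pos hpos, smul_smul, mul_inv_cancel₀ hpos.ne', one_smul,
    mul_div_cancel_left₀ _ hS.ne', Real.log_exp]

end LogarithmicSubstitution

section Flux

variable {a σ : ℝ}

lemma fluxFn_eq_mul_expNegRemainder (ha : 0 < a) (hσ : 0 < σ) :
    fluxFn a σ = σ / Real.log (1 / a) * expNegRemainder (Real.log (σ / a)) := by
  rw [expNegRemainder, Real.exp_neg, Real.exp_log (by positivity), Real.log_div hσ.ne' ha.ne',
    fluxFn]
  field_simp
  ring

lemma hasDerivAt_fluxFn (a : ℝ) (hσ : σ ≠ 0) :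
    HasDerivAt (fluxFn a) (1 / Real.log (1 / a) * (Real.log σ - Real.log a)) σ := by
  refine ((((hasDerivAt_id σ).mul ((Real.hasDerivAt_log hσ).sub_const (Real.log a))).sub
    ((hasDerivAt_id σ).sub_const a)).const_mul (1 / Real.log (1 / a))).congr_deriv ?_
  simp only [id_eq, one_mul, mul_inv_cancel₀ hσ, add_sub_cancel_right]

lemma deriv_deriv_fluxFn (a : ℝ) (hσ : σ ≠ 0) :
    deriv (deriv (fluxFn a)) σ = 1 / Real.log (1 / a) * σ⁻¹ := by
  have deriv_near : deriv (fluxFn a) =ᶠ[nhds σ]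
      fun τ => 1 / Real.log (1 / a) * (Real.log τ - Real.log a) := by
    filter_upwards [isOpen_ne.mem_nhds hσ] with τ hτ using (hasDerivAt_fluxFn a hτ).deriv
  rw [deriv_near.deriv_eq]
  exact (((Real.hasDerivAt_log hσ).sub_const _).const_mul _).deriv

lemma deriv_deriv_comp_const_mul {𝕜 F : Type*} [NontriviallyNormedField 𝕜]
    [NormedAddCommGroup F] [NormedSpace 𝕜 F] (f : 𝕜 → F) (c s : 𝕜) :
    deriv (deriv fun t => f (c * t)) s = c ^ 2 • deriv (deriv f) (c * s) := by
  have first_deriv : (deriv fun t => f (c * t)) = fun t => c • deriv f (c * t) :=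
    funext fun t => deriv_comp_mul_left c f t
  rw [first_deriv, deriv_fun_const_smul_field, deriv_comp_mul_left c (deriv f) s, smul_smul, sq]

lemma deriv_deriv_fluxFn_two_mul_div (a : ℝ) {s₀ s : ℝ} (hs₀ : s₀ ≠ 0) (hs : s ≠ 0) :
    deriv (deriv fun τ => fluxFn a (2 * τ / s₀)) s = 2 / (s₀ * s * Real.log (1 / a)) := by
  simp only [mul_div_right_comm (2 : ℝ)]
  rw [deriv_deriv_comp_const_mul, deriv_deriv_fluxFn a (by positivity), smul_eq_mul]
  field_simp

end Flux

section WeightedIntegral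

variable {γ S s₀ : ℝ}

lemma rpow_mul_rpow_mul_sq_mul_rpow_neg (γ : ℝ) {s X h : ℝ} (hs : 0 < s) (hX : 0 < X)
    (hh : 0 ≤ h) :
    s ^ (2 * γ) * X ^ (1 + γ) * (s ^ 2 * X * h) ^ (-γ) = X * h ^ (-γ) := by
  have split_rpow : (s ^ 2 * X * h) ^ (-γ) = (s ^ (2 * γ))⁻¹ * (X ^ γ)⁻¹ * h ^ (-γ) := by
    rw [Real.mul_rpow (by positivity) hh, Real.mul_rpow (by positivity) hX.le,
      Real.rpow_neg (sq_nonneg s), Real.rpow_neg hX.le, ← Real.rpow_natCast_mul hs.le,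
      Nat.cast_ofNat]
  rw [split_rpow, Real.rpow_add hX, Real.rpow_one]
  field_simp

lemma log_one_div_two_mul_div_pos (hS : 0 < S) (hSs₀ : S < s₀ / 2) :
    0 < Real.log (1 / (2 * S / s₀)) := by
  have hs₀ : 0 < s₀ := by linarith
  refine Real.log_pos ((one_lt_div (by positivity)).2 ((div_lt_one hs₀).2 ?_))
  linarith

lemma weighted_fluxFn_eq (γ : ℝ) {s : ℝ} (hS : 0 < S) (hs : s ∈ Set.Ioo S (s₀ / 2)) :
    s ^ (2 * γ) * (2 / (s₀ * s * Real.log (1 / (2 * S / s₀)))) ^ (1 + γ)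
        * fluxFn (2 * S / s₀) (2 * s / s₀) ^ (-γ)
      = 2 / (s₀ * Real.log (1 / (2 * S / s₀)))
        * (s⁻¹ • expNegRemainder (Real.log (s / S)) ^ (-γ)) := by
  have hs_pos : 0 < s := hS.trans hs.1
  have hs₀ : 0 < s₀ := by linarith [hs.2]
  have hL : 0 < Real.log (1 / (2 * S / s₀)) := log_one_div_two_mul_div_pos hS (hs.1.trans hs.2)
  have flux_eq : fluxFn (2 * S / s₀) (2 * s / s₀)
      = s ^ 2 * (2 / (s₀ * s * Real.log (1 / (2 * S / s₀))))
        * expNegRemainder (Real.log (s / S)) := by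
    rw [fluxFn_eq_mul_expNegRemainder (by positivity) (by positivity),
      div_div_div_cancel_right₀ hs₀.ne', mul_div_mul_left s S two_ne_zero]
    field_simp
  rw [flux_eq, rpow_mul_rpow_mul_sq_mul_rpow_neg γ hs_pos (by positivity)
    (expNegRemainder_nonneg _), smul_eq_mul]
  field_simp

lemma setIntegral_weighted_fluxFn_eq (γ : ℝ) (hS : 0 < S) (hs₀ : 0 < s₀) :
    ∫ s in Set.Ioo S (s₀ / 2),
        s ^ (2 * γ) * (2 / (s₀ * s * Real.log (1 / (2 * S / s₀)))) ^ (1 + γ)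
          * fluxFn (2 * S / s₀) (2 * s / s₀) ^ (-γ)
      = 2 / (s₀ * Real.log (1 / (2 * S / s₀)))
        * ∫ u in Set.Ioo 0 (Real.log (1 / (2 * S / s₀))), expNegRemainder u ^ (-γ) := by
  have endpoint : s₀ / 2 / S = 1 / (2 * S / s₀) := by field_simp
  rw [setIntegral_congr_fun measurableSet_Ioo fun s hs => weighted_fluxFn_eq γ hS hs,
    integral_const_mul,
    setIntegral_inv_smul_comp_log_div hS (half_pos hs₀) fun u => expNegRemainder u ^ (-γ), endpoint]

lemma setIntegral_weighted_fluxFn_le (hγ₀ : 0 ≤ γ) (hγ : γ < 1 / 2) (hS : 0 < S)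
    (hSs₀ : S < s₀ / 2) :
    ∫ s in Set.Ioo S (s₀ / 2),
        s ^ (2 * γ) * (2 / (s₀ * s * Real.log (1 / (2 * S / s₀)))) ^ (1 + γ)
          * fluxFn (2 * S / s₀) (2 * s / s₀) ^ (-γ)
      ≤ 2 / (s₀ * (1 - 2 * γ))
        * ((Real.log (1 / (2 * S / s₀)) + 2) / Real.log (1 / (2 * S / s₀)) ^ 2) ^ γ := by
  have hs₀ : 0 < s₀ := by linarith
  have hγ' : 1 - 2 * γ ≠ 0 := by linarith
  have hL := log_one_div_two_mul_div_pos hS hSs₀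
  rw [setIntegral_weighted_fluxFn_eq γ hS hs₀]
  set L := Real.log (1 / (2 * S / s₀))
  calc 2 / (s₀ * L) * ∫ u in Set.Ioo 0 L, expNegRemainder u ^ (-γ)
      ≤ 2 / (s₀ * L) * ((L + 2) ^ γ * (L ^ (1 - 2 * γ) / (1 - 2 * γ))) := by
        gcongr
        exact setIntegral_expNegRemainder_rpow_neg_le hγ₀ hγ hL.le
    _ = 2 / (s₀ * (1 - 2 * γ)) * ((L + 2) / L ^ 2) ^ γ := by
        rw [Real.div_rpow (by positivity) (by positivity), ← Real.rpow_natCast_mul hL.le,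
          Nat.cast_ofNat, Real.rpow_sub hL, Real.rpow_one]
        field_simp

lemma log_add_two_div_sq_le (hS : 0 < S) (hSs₀ : S ≤ s₀ / 3) :
    (Real.log (1 / (2 * S / s₀)) + 2) / Real.log (1 / (2 * S / s₀)) ^ 2
      ≤ 21 / (Real.log s₀ - Real.log S) := by
  have hs₀ : 0 < s₀ := by linarith
  have log_diff : Real.log s₀ - Real.log S = Real.log (1 / (2 * S / s₀)) + Real.log 2 := by
    rw [← Real.log_div hs₀.ne' hS.ne', ← Real.log_mul (by positivity) two_ne_zero]
    congr 1
    field_simp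
  have log_ge : Real.log (3 / 2) ≤ Real.log (1 / (2 * S / s₀)) := by
    refine Real.log_le_log (by norm_num) ?_
    rw [one_div_div, le_div_iff₀ (by positivity)]
    linarith
  have third_le_log : 1 / 3 ≤ Real.log (3 / 2) :=
    le_trans (by norm_num) (Real.one_sub_inv_le_log_of_pos (by norm_num))
  have log_two_le : Real.log 2 ≤ 2 * Real.log (3 / 2) := by
    rw [← Nat.cast_ofNat (R := ℝ) (n := 2), ← Real.log_pow]
    exact Real.log_le_log (by norm_num) (by norm_num)
  have log_two_pos : 0 < Real.log 2 := Real.log_pos one_lt_two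
  rw [log_diff]
  set L := Real.log (1 / (2 * S / s₀))
  have hL : 0 < L := by linarith
  rw [div_le_div_iff₀ (by positivity) (by positivity)]
  calc (L + 2) * (L + Real.log 2)
      ≤ 7 * L * (3 * L) := by gcongr <;> linarith
    _ = 21 * L ^ 2 := by ring

end WeightedIntegral

theorem stmt_9 (γ : ℝ) (hγ : γ ∈ Set.Ioo (0 : ℝ) (1 / 2)) :
    ∃ C : ℝ, ∀ S s₀ : ℝ, 0 < S → S ≤ s₀ / 3 →
      -- with `a := 2*S/s₀ ∈ (0,1)` and `φ(s) := f_a (2*s/s₀)`, on `(S, s₀/2)` the second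
      -- derivative of `φ` is `φ''(s) = 2/(s₀ * s * log(1/a)) > 0`, and the weighted
      -- integral of `s^(2γ) * φ''(s)^(1+γ) * φ(s)^(-γ)` is controlled:
      2 * S / s₀ ∈ Set.Ioo (0 : ℝ) 1 ∧
      (∀ s ∈ Set.Ioo S (s₀ / 2),
        deriv (deriv (fun τ : ℝ => fluxFn (2 * S / s₀) (2 * τ / s₀))) s
            = 2 / (s₀ * s * Real.log (1 / (2 * S / s₀))) ∧
        0 < 2 / (s₀ * s * Real.log (1 / (2 * S / s₀)))) ∧
      ∫ s in Set.Ioo S (s₀ / 2),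
          s ^ (2 * γ) * (2 / (s₀ * s * Real.log (1 / (2 * S / s₀)))) ^ (1 + γ)
            * fluxFn (2 * S / s₀) (2 * s / s₀) ^ (-γ)
        ≤ C / (s₀ * (Real.log s₀ - Real.log S) ^ γ) := by
  obtain ⟨hγ₀, hγ₁⟩ := hγ
  refine ⟨2 * 21 ^ γ / (1 - 2 * γ), fun S s₀ hS hSs₀ => ?_⟩
  have hs₀ : 0 < s₀ := by linarith
  have hS_lt : S < s₀ / 2 := by linarith
  have hL := log_one_div_two_mul_div_pos hS hS_lt
  refine ⟨⟨by positivity, (div_lt_one hs₀).2 (by linarith)⟩, fun s hs => ?_, ?_⟩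
  · have hs_pos : 0 < s := hS.trans hs.1
    exact ⟨deriv_deriv_fluxFn_two_mul_div _ hs₀.ne' hs_pos.ne', by positivity⟩
  · have log_diff_pos : 0 < Real.log s₀ - Real.log S :=
      sub_pos.2 (Real.log_lt_log hS (by linarith))
    have one_sub_pos : 0 < 1 - 2 * γ := by linarith
    refine (setIntegral_weighted_fluxFn_le hγ₀.le hγ₁ hS hS_lt).trans ?_
    calc _ ≤ 2 / (s₀ * (1 - 2 * γ)) * (21 / (Real.log s₀ - Real.log S)) ^ γ := by
          gcongr ?_ * ?_ ^ γ
          exact log_add_two_div_sq_le hS hSs₀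
      _ = _ := by
          rw [Real.div_rpow (by norm_num) log_diff_pos.le]
          field_simp
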